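/- Let Λ ⊆ ℤ be relatively dense in ℝ (there exists R > 0 such that every interval of length R meets Λ), and suppose the measures γ_n defined by γ_n(f) = (1/(2n))·Σ_{x,y∈Λ∩[−n,n]} f(x−y) converge vaguely to a Radon measure γ, i.e., γ_n(f) → ∫ f dγ for every continuous compactly supported f : ℝ → ℂ. For each n ≥ 3 set Γ_n = n! + (Λ ∩ [−n, n]) and Γ = ∪_{n≥3} Γ_n (a disjoint union). Then: (a) card(Γ ∩ [−n, n])/(2n) → 0 as n → ∞; and (b) γ({0}) = lim_n card(Λ ∩ [−n,n])/(2n) > 0, and writing E_n = Γ ∩ [−n, n], for every continuous compactly supported f : ℝ → ℂ one has (1/card E_n)·Σ_{x,y∈E_n} f(x−y) → (1/γ({0}))·∫ f dγ as n → ∞; that is, the counting autocorrelation of Γ with respect to ([−n,n]) exists and equals (1/γ({0}))·γ. -/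

import Mathlib

open Filter Topology Set MeasureTheory

/-- The counting-normalised autocorrelation sum of the finite sample `F` applied to a
test function `f`; interpreted as `0` when `F = ∅`. -/
noncomputable def autoCorr (F : Set ℝ) (f : ℝ → ℂ) : ℂ :=
  ((F.ncard : ℂ))⁻¹ * ∑ᶠ x ∈ F, ∑ᶠ y ∈ F, f (x - y)

/-- `Γ = ⋃_{n ≥ 3} (n! + (Λ ∩ [−n, n]))`. -/
def shiftUnion (Λ : Set ℝ) : Set ℝ :=
  ⋃ n : ℕ, ⋃ (_ : 3 ≤ n),
    (fun x => ((Nat.factorial n : ℕ) : ℝ) + x) '' (Λ ∩ Set.Icc (-(n : ℝ)) (n : ℝ))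

/-!
The block `n! + (Λ ∩ [-n, n])` of `Γ` has as many points as `Λ ∩ [-n, n]` and the same differences,
so its counting autocorrelation is asymptotically that of `Λ`. The gaps between consecutive blocks
tend to infinity, so a compactly supported `f` eventually sees no pair of points from different
blocks, and the counting autocorrelation of a union of initial blocks is an average of those of the
blocks, weighted by cardinality; Stolz–Cesàro gives its limit. The window `[-n, n]` cuts at most one
block, whose size is linear in its index and hence negligible against the quadratically growing
union of the earlier ones. The same union is negligible against the factorial position of its last
block, so `Γ` has density zero.

The atom of `γ` at `0` is the density of `Λ`, since distinct points of `Λ` are uniformly separated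
and a narrow bump at `0` sees only the pairs `x = y`.
-/

open Asymptotics Function

section PairSum

variable {G E : Type*} [AddCommGroup G]

/-- The sum of `f` over all differences of two points of `S`, counted with multiplicity: the
unnormalised autocorrelation of `S` evaluated at the test function `f`. -/
def pairSum [AddCommMonoid E] (f : G → E) (S : Finset G) : E :=
  ∑ x ∈ S, ∑ y ∈ S, f (x - y)

/-- The autocorrelation of `S` normalised by the number of points, equal to `0` for empty `S`. It is
the Finset form of `autoCorr`, with values in an arbitrary real vector space. -/
noncomputable def pairMean [AddCommGroup E] [Module ℝ E] (f : G → E) (S : Finset G) : E :=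
  (S.card : ℝ)⁻¹ • pairSum f S

lemma autoCorr_coe_finset (S : Finset ℝ) (f : ℝ → ℂ) : autoCorr S f = pairMean f S := by
  simp only [autoCorr, pairMean, pairSum, ncard_coe_finset, finsum_mem_coe_finset,
    Complex.real_smul, Complex.ofReal_inv, Complex.ofReal_natCast]

lemma pairSum_map_addLeftEmbedding [AddCommMonoid E] (f : G → E) (a : G) (S : Finset G) :
    pairSum f (S.map (addLeftEmbedding a)) = pairSum f S := by
  simp [pairSum]

lemma pairMean_map_addLeftEmbedding [AddCommGroup E] [Module ℝ E] (f : G → E) (a : G)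
    (S : Finset G) : pairMean f (S.map (addLeftEmbedding a)) = pairMean f S := by
  rw [pairMean, pairMean, pairSum_map_addLeftEmbedding, Finset.card_map]

lemma pairSum_union_of_cross_eq_zero [AddCommMonoid E] [DecidableEq G] {f : G → E} {S T : Finset G}
    (hdisj : Disjoint S T) (hcross : ∀ x ∈ S, ∀ y ∈ T, f (x - y) = 0 ∧ f (y - x) = 0) :
    pairSum f (S ∪ T) = pairSum f S + pairSum f T := by
  have hST : ∑ x ∈ S, ∑ y ∈ T, f (x - y) = 0 :=
    Finset.sum_eq_zero fun x hx ↦ Finset.sum_eq_zero fun y hy ↦ (hcross x hx y hy).1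
  have hTS : ∑ y ∈ T, ∑ x ∈ S, f (y - x) = 0 :=
    Finset.sum_eq_zero fun y hy ↦ Finset.sum_eq_zero fun x hx ↦ (hcross x hx y hy).2
  simp only [pairSum, Finset.sum_union hdisj, Finset.sum_add_distrib, hST, hTS, add_zero, zero_add]

lemma pairSum_eq_card [AddCommMonoidWithOne E] {f : G → E} {S : Finset G} (hzero : f 0 = 1)
    (hne : ∀ x ∈ S, ∀ y ∈ S, x ≠ y → f (x - y) = 0) : pairSum f S = S.card := by
  have hrow : ∀ x ∈ S, ∑ y ∈ S, f (x - y) = 1 := fun x hx ↦ by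
    rw [Finset.sum_eq_single_of_mem x hx fun y hy hyx ↦ hne x hx y hy hyx.symm, sub_self, hzero]
  rw [pairSum, Finset.sum_congr rfl hrow, Finset.sum_const, nsmul_one]

lemma pairSum_le_pairSum_of_subset {f : G → ℝ} (hf : 0 ≤ f) {S T : Finset G} (hST : S ⊆ T) :
    pairSum f S ≤ pairSum f T :=
  calc pairSum f S ≤ ∑ x ∈ S, ∑ y ∈ T, f (x - y) :=
        Finset.sum_le_sum fun _ _ ↦ Finset.sum_le_sum_of_subset_of_nonneg hST fun _ _ _ ↦ hf _
    _ ≤ pairSum f T :=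
        Finset.sum_le_sum_of_subset_of_nonneg hST fun _ _ _ ↦ Finset.sum_nonneg fun _ _ ↦ hf _

lemma norm_pairSum_le [SeminormedAddCommGroup E] (f : G → E) (S : Finset G) :
    ‖pairSum f S‖ ≤ pairSum (fun x ↦ ‖f x‖) S :=
  norm_sum_le_of_le S fun _ _ ↦ norm_sum_le _ _

lemma pairSum_ofReal (φ : G → ℝ) (S : Finset G) :
    pairSum (fun x ↦ (φ x : ℂ)) S = (pairSum φ S : ℝ) := by
  simp only [pairSum, Complex.ofReal_sum]

lemma card_smul_pairMean [AddCommGroup E] [Module ℝ E] (f : G → E) (S : Finset G) :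
    (S.card : ℝ) • pairMean f S = pairSum f S := by
  obtain rfl | hS := S.eq_empty_or_nonempty
  · simp [pairSum]
  · exact smul_inv_smul₀ (by exact_mod_cast hS.card_ne_zero) _

variable [NormedAddCommGroup E] [NormedSpace ℝ E]

lemma tendsto_pairMean_iff_isLittleO {ι : Type*} {l : Filter ι} {f : G → E} {q : E}
    {S : ι → Finset G} (hS : ∀ᶠ n in l, (S n).card ≠ 0) :
    Tendsto (fun n ↦ pairMean f (S n)) l (𝓝 q) ↔
      (fun n ↦ pairSum f (S n) - ((S n).card : ℝ) • q) =o[l] fun n ↦ ((S n).card : ℝ) := by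
  have hfactor : ∀ n, pairSum f (S n) - ((S n).card : ℝ) • q =
      ((S n).card : ℝ) • (pairMean f (S n) - q) := fun n ↦ by
    rw [smul_sub, card_smul_pairMean]
  rw [← isLittleO_norm_left, isLittleO_iff_tendsto' (hS.mono fun n hn h0 ↦ absurd h0 (mod_cast hn)),
    tendsto_iff_norm_sub_tendsto_zero]
  refine tendsto_congr' (hS.mono fun n hn ↦ ?_)
  have : ((S n).card : ℝ) ≠ 0 := mod_cast hn
  simp only [hfactor, norm_smul, RCLike.norm_natCast]
  rw [mul_div_cancel_left₀ _ this]

lemma tendsto_pairMean_of_tendsto_inv_smul {ι : Type*} {l : Filter ι} {f : G → E} {I : E} {L : ℝ}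
    {a : ι → ℝ} {S : ι → Finset G} (hL : L ≠ 0)
    (hcard : Tendsto (fun n ↦ ((S n).card : ℝ) / a n) l (𝓝 L))
    (hsum : Tendsto (fun n ↦ (a n)⁻¹ • pairSum f (S n)) l (𝓝 I)) :
    Tendsto (fun n ↦ pairMean f (S n)) l (𝓝 (L⁻¹ • I)) := by
  refine ((hcard.inv₀ hL).smul hsum).congr' ?_
  filter_upwards [hcard.eventually_ne hL] with n hn
  have ha : a n ≠ 0 := fun ha ↦ hn (by rw [ha, div_zero])
  rw [smul_smul, inv_div, div_mul_eq_mul_div, mul_inv_cancel₀ ha, one_div, pairMean]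

lemma isBigO_pairSum_sub_card_smul_of_subset {f : G → E} (q : E) {B : ℕ → Finset G}
    (hbdd : (fun k ↦ pairMean (fun x ↦ ‖f x‖) (B k)) =O[atTop] fun _ ↦ (1 : ℝ))
    {ι : Type*} {l : Filter ι} {i : ι → ℕ} (hi : Tendsto i l atTop)
    {F : ι → Finset G} (hF : ∀ n, F n ⊆ B (i n)) :
    (fun n ↦ pairSum f (F n) - ((F n).card : ℝ) • q) =O[l] fun n ↦ ((B (i n)).card : ℝ) := by
  have hnorm : (fun k ↦ pairSum (fun x ↦ ‖f x‖) (B k)) =O[atTop] fun k ↦ ((B k).card : ℝ) := by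
    simpa only [← card_smul_pairMean, smul_eq_mul, mul_one] using
      (isBigO_refl (fun k ↦ ((B k).card : ℝ)) atTop).mul hbdd
  refine .sub (.trans (.of_norm_le fun n ↦ ?_) (hnorm.comp_tendsto hi))
    (.of_bound ‖q‖ (.of_forall fun n ↦ ?_))
  · exact (norm_pairSum_le f _).trans
      (pairSum_le_pairSum_of_subset (fun _ ↦ norm_nonneg _) (hF n))
  · rw [norm_smul, RCLike.norm_natCast, RCLike.norm_natCast, mul_comm]
    gcongr
    exact hF n

end PairSum

lemma isLittleO_sum_range_of_tendsto_atTop {c : ℕ → ℝ} (hnonneg : 0 ≤ c)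
    (htop : Tendsto c atTop atTop) (hlin : c =O[atTop] fun k ↦ (k : ℝ)) :
    c =o[atTop] fun m ↦ ∑ k ∈ Finset.range m, c k := by
  have hone : (fun _ ↦ (1 : ℝ)) =o[atTop] c :=
    isLittleO_const_left.2 (.inr (tendsto_norm_atTop_atTop.comp htop))
  have hsum : Tendsto (fun m ↦ ∑ k ∈ Finset.range m, c k) atTop atTop := by
    rw [← tendsto_add_atTop_iff_nat 1]
    exact tendsto_atTop_mono (fun m ↦ Finset.single_le_sum (f := c) (fun k _ ↦ hnonneg k)
      (Finset.self_mem_range_succ m)) htop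
  have hid := hone.sum_range hnonneg hsum
  simp only [Finset.sum_const, Finset.card_range, nsmul_one] at hid
  exact hlin.trans_isLittleO hid

section BlockUnion

variable {G : Type*} [DecidableEq G] {B : ℕ → Finset G}

/-- The union of the first `m` blocks `B 0, …, B (m - 1)`. -/
def blockUnion (B : ℕ → Finset G) (m : ℕ) : Finset G := (Finset.range m).biUnion B

lemma mem_blockUnion {m : ℕ} {x : G} : x ∈ blockUnion B m ↔ ∃ k < m, x ∈ B k := by
  simp [blockUnion]

lemma blockUnion_succ (B : ℕ → Finset G) (m : ℕ) :
    blockUnion B (m + 1) = blockUnion B m ∪ B m := by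
  rw [blockUnion, Finset.range_add_one, Finset.biUnion_insert, Finset.union_comm, blockUnion]

lemma disjoint_blockUnion (hdisj : Pairwise (Disjoint on B)) (m : ℕ) :
    Disjoint (blockUnion B m) (B m) :=
  (Finset.disjoint_biUnion_left _ _ _).2 fun _ hk ↦ hdisj (Finset.mem_range.1 hk).ne

lemma sum_range_card_eq_card_blockUnion (hdisj : Pairwise (Disjoint on B)) (m : ℕ) :
    ∑ k ∈ Finset.range m, ((B k).card : ℝ) = (blockUnion B m).card := by
  rw [blockUnion, Finset.card_biUnion fun _ _ _ _ hjk ↦ hdisj hjk, Nat.cast_sum]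

lemma tendsto_card_blockUnion_atTop (hcard : Tendsto (fun k ↦ (B k).card) atTop atTop) :
    Tendsto (fun m ↦ (blockUnion B m).card) atTop atTop := by
  rw [← tendsto_add_atTop_iff_nat 1]
  refine tendsto_atTop_mono (fun m ↦ Finset.card_le_card ?_) hcard
  rw [blockUnion_succ]
  exact Finset.subset_union_right

lemma card_isLittleO_card_blockUnion (hdisj : Pairwise (Disjoint on B))
    (hcard : Tendsto (fun k ↦ (B k).card) atTop atTop)
    (hlin : (fun k ↦ ((B k).card : ℝ)) =O[atTop] fun k ↦ (k : ℝ)) :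
    (fun k ↦ ((B k).card : ℝ)) =o[atTop] fun k ↦ ((blockUnion B k).card : ℝ) := by
  simpa only [sum_range_card_eq_card_blockUnion hdisj] using
    isLittleO_sum_range_of_tendsto_atTop (fun k ↦ Nat.cast_nonneg _)
      (tendsto_natCast_atTop_atTop.comp hcard) hlin

lemma card_blockUnion_isLittleO_factorial (hdisj : Pairwise (Disjoint on B))
    (hlin : (fun k ↦ ((B k).card : ℝ)) =O[atTop] fun k ↦ (k : ℝ)) :
    (fun m ↦ ((blockUnion B m).card : ℝ)) =o[atTop] fun m ↦ ((m + 1).factorial : ℝ) := by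
  have hfact : Tendsto (fun m : ℕ ↦ ((m + 1).factorial : ℝ)) atTop atTop :=
    tendsto_natCast_atTop_atTop.comp (factorial_tendsto_atTop.comp (tendsto_add_atTop_nat 1))
  have hdiff : ∀ k : ℕ, ((k + 1 + 1).factorial - (k + 1).factorial : ℝ) =
      (k + 1) * (k + 1).factorial := fun k ↦ by
    rw [Nat.factorial_succ (k + 1)]
    push_cast
    ring
  have hone : (fun _ ↦ (1 : ℝ)) =o[atTop] fun m : ℕ ↦ ((m + 1).factorial : ℝ) :=
    isLittleO_const_left.2 (.inr (tendsto_norm_atTop_atTop.comp hfact))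
  have hsucc : (fun k : ℕ ↦ (k : ℝ)) =O[atTop] fun k : ℕ ↦ (k + 1 : ℝ) :=
    .of_norm_le fun k ↦ by simp
  have hterm : (fun k ↦ ((B k).card : ℝ)) =o[atTop]
      fun k ↦ ((k + 1 + 1).factorial - (k + 1).factorial : ℝ) := by
    simpa only [hdiff, mul_one] using (hlin.trans hsucc).mul_isLittleO hone
  have hsum := hterm.sum_range (fun k ↦ by simp only [hdiff]; positivity) (by
    simp only [Finset.sum_range_sub fun m ↦ ((m + 1).factorial : ℝ)]
    exact tendsto_atTop_add_const_right _ _ hfact)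
  simp only [sum_range_card_eq_card_blockUnion hdisj,
    Finset.sum_range_sub fun m ↦ ((m + 1).factorial : ℝ)] at hsum
  exact hsum.trans_isBigO ((isBigO_refl _ _).sub (by simpa using hone.isBigO))

lemma tendsto_card_div_zero_of_subset_blockUnion (hdisj : Pairwise (Disjoint on B))
    (hlin : (fun k ↦ ((B k).card : ℝ)) =O[atTop] fun k ↦ (k : ℝ))
    {i : ℕ → ℕ} (hi : Tendsto i atTop atTop) (hfact : ∀ᶠ n in atTop, (i n + 2).factorial ≤ n)
    {S : ℕ → Finset G} (hS : ∀ n, S n ⊆ blockUnion B (i n + 1)) :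
    Tendsto (fun n ↦ ((S n).card : ℝ) / (2 * n)) atTop (𝓝 0) := by
  have hSU : (fun n ↦ ((S n).card : ℝ)) =O[atTop]
      fun n ↦ ((blockUnion B (i n + 1)).card : ℝ) := .of_norm_le fun n ↦ by
    rw [RCLike.norm_natCast]
    exact_mod_cast Finset.card_le_card (hS n)
  have hU : (fun n ↦ ((blockUnion B (i n + 1)).card : ℝ)) =o[atTop]
      fun n ↦ ((i n + 2).factorial : ℝ) :=
    (card_blockUnion_isLittleO_factorial hdisj hlin).comp_tendsto
      ((tendsto_add_atTop_nat 1).comp hi)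
  have hn : (fun n ↦ ((i n + 2).factorial : ℝ)) =O[atTop] fun n : ℕ ↦ (2 * n : ℝ) := by
    refine .of_norm_eventuallyLE (hfact.mono fun n hn ↦ ?_)
    simp only [RCLike.norm_natCast]
    exact_mod_cast hn.trans (Nat.le_mul_of_pos_left n two_pos)
  exact ((hSU.trans_isLittleO hU).trans_isBigO hn).tendsto_div_nhds_zero

variable [AddCommGroup G] {E : Type*}

lemma pairSum_blockUnion_union [AddCommMonoid E] {f : G → E} (hdisj : Pairwise (Disjoint on B))
    {k : ℕ} (hcross : ∀ j < k, ∀ x ∈ B j, ∀ y ∈ B k, f (x - y) = 0 ∧ f (y - x) = 0)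
    {F : Finset G} (hF : F ⊆ B k) :
    pairSum f (blockUnion B k ∪ F) = pairSum f (blockUnion B k) + pairSum f F := by
  refine pairSum_union_of_cross_eq_zero ((disjoint_blockUnion hdisj k).mono_right hF)
    fun x hx y hy ↦ ?_
  obtain ⟨j, hjk, hxj⟩ := mem_blockUnion.1 hx
  exact hcross j hjk x hxj y (hF hy)

variable [NormedAddCommGroup E] [NormedSpace ℝ E] {f : G → E} {q : E}

theorem tendsto_pairMean_blockUnion (hdisj : Pairwise (Disjoint on B))
    (hcross : ∀ᶠ k in atTop, ∀ j < k, ∀ x ∈ B j, ∀ y ∈ B k, f (x - y) = 0 ∧ f (y - x) = 0)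
    (hcard : Tendsto (fun k ↦ (B k).card) atTop atTop)
    (hmean : Tendsto (fun k ↦ pairMean f (B k)) atTop (𝓝 q)) :
    Tendsto (fun m ↦ pairMean f (blockUnion B m)) atTop (𝓝 q) := by
  have hcardU := tendsto_card_blockUnion_atTop hcard
  rw [tendsto_pairMean_iff_isLittleO (hcard.eventually_ne_atTop 0)] at hmean
  rw [tendsto_pairMean_iff_isLittleO (hcardU.eventually_ne_atTop 0)]
  set D : ℕ → E := fun m ↦ pairSum f (blockUnion B m) - ((blockUnion B m).card : ℝ) • q with hD
  have hincr : (fun k ↦ D (k + 1) - D k) =o[atTop] fun k ↦ ((B k).card : ℝ) := by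
    refine hmean.congr' (hcross.mono fun k hk ↦ ?_) .rfl
    simp only [hD, blockUnion_succ, pairSum_blockUnion_union hdisj hk subset_rfl,
      Finset.card_union_of_disjoint (disjoint_blockUnion hdisj k), Nat.cast_add, add_smul]
    abel
  have hsum := hincr.sum_range (fun k ↦ Nat.cast_nonneg _)
    (by simpa only [sum_range_card_eq_card_blockUnion hdisj] using
      tendsto_natCast_atTop_iff.2 hcardU)
  have hD0 : D 0 = 0 := by simp [hD, blockUnion, pairSum]
  simpa only [Finset.sum_range_sub, hD0, sub_zero, sum_range_card_eq_card_blockUnion hdisj]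
    using hsum

theorem tendsto_pairMean_of_blockUnion_subset (hdisj : Pairwise (Disjoint on B))
    (hcross : ∀ᶠ k in atTop, ∀ j < k, ∀ x ∈ B j, ∀ y ∈ B k, f (x - y) = 0 ∧ f (y - x) = 0)
    (hcard : Tendsto (fun k ↦ (B k).card) atTop atTop)
    (hlin : (fun k ↦ ((B k).card : ℝ)) =O[atTop] fun k ↦ (k : ℝ))
    (hbdd : (fun k ↦ pairMean (fun x ↦ ‖f x‖) (B k)) =O[atTop] fun _ ↦ (1 : ℝ))
    (hmean : Tendsto (fun k ↦ pairMean f (B k)) atTop (𝓝 q))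
    {ι : Type*} {l : Filter ι} {i : ι → ℕ} (hi : Tendsto i l atTop) {S : ι → Finset G}
    (hlower : ∀ n, blockUnion B (i n) ⊆ S n) (hupper : ∀ n, S n ⊆ blockUnion B (i n + 1)) :
    Tendsto (fun n ↦ pairMean f (S n)) l (𝓝 q) := by
  have hcardU := tendsto_card_blockUnion_atTop hcard
  have hcardS : Tendsto (fun n ↦ (S n).card) l atTop :=
    tendsto_atTop_mono (fun n ↦ Finset.card_le_card (hlower n)) (hcardU.comp hi)
  have hUS : (fun n ↦ ((blockUnion B (i n)).card : ℝ)) =O[l] fun n ↦ ((S n).card : ℝ) :=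
    .of_norm_le fun n ↦ by
      rw [RCLike.norm_natCast]
      exact_mod_cast Finset.card_le_card (hlower n)
  have hrest : ∀ n, S n \ blockUnion B (i n) ⊆ B (i n) := fun n ↦
    sdiff_le_iff.2 ((hupper n).trans_eq (blockUnion_succ B _))
  have hfull := ((tendsto_pairMean_iff_isLittleO (hcardU.eventually_ne_atTop 0)).1
    (tendsto_pairMean_blockUnion hdisj hcross hcard hmean)).comp_tendsto hi
  have hpart := (isBigO_pairSum_sub_card_smul_of_subset q hbdd hi hrest).trans_isLittleO
    ((card_isLittleO_card_blockUnion hdisj hcard hlin).comp_tendsto hi)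
  rw [tendsto_pairMean_iff_isLittleO (hcardS.eventually_ne_atTop 0)]
  refine ((hfull.add hpart).trans_isBigO hUS).congr' ?_ .rfl
  filter_upwards [hi.eventually hcross] with n hn
  have hsum := pairSum_blockUnion_union hdisj hn (hrest n)
  rw [Finset.union_sdiff_of_subset (hlower n)] at hsum
  simp only [comp_apply, hsum, ← Finset.card_sdiff_add_card_eq_card (hlower n), Nat.cast_add,
    add_smul]
  abel

end BlockUnion

section Autocorrelation

variable {G ι : Type*} [NormedAddCommGroup G] [MeasurableSpace G] {P : ι → Finset G}
  {a : ι → ℝ} {l : Filter ι} {γ : Measure G}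

/-- `γ` is the autocorrelation of the finite samples `P n` with normalisation `a n`: the measures
`(a n)⁻¹ ∑_{x, y ∈ P n} δ_{x - y}` converge vaguely to `γ` along `l`. -/
def HasAutocorrelation (P : ι → Finset G) (a : ι → ℝ) (l : Filter ι) (γ : Measure G) : Prop :=
  ∀ f : G → ℂ, Continuous f → HasCompactSupport f →
    Tendsto (fun n ↦ (a n)⁻¹ • pairSum f (P n)) l (𝓝 (∫ x, f x ∂γ))

lemma HasAutocorrelation.tendsto_real (hγ : HasAutocorrelation P a l γ) {φ : G → ℝ}
    (hφ : Continuous φ) (hφc : HasCompactSupport φ) :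
    Tendsto (fun n ↦ (a n)⁻¹ • pairSum φ (P n)) l (𝓝 (∫ x, φ x ∂γ)) := by
  have hcomplex := hγ (fun x ↦ (φ x : ℂ)) (Complex.continuous_ofReal.comp hφ)
    (hφc.comp_left Complex.ofReal_zero)
  simp only [pairSum_ofReal, integral_complex_ofReal, Complex.real_smul, ← Complex.ofReal_mul]
    at hcomplex
  exact tendsto_ofReal_iff.1 hcomplex

lemma tendsto_integral_pow_succ {X : Type*} [MeasurableSpace X] {μ : Measure X} {φ : X → ℝ}
    (hφ : Integrable φ μ) (hφ01 : ∀ x, φ x ∈ Icc 0 1) :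
    Tendsto (fun k : ℕ ↦ ∫ x, φ x ^ (k + 1) ∂μ) atTop (𝓝 (μ.real (φ ⁻¹' {1}))) := by
  have hpre : NullMeasurableSet (φ ⁻¹' {1}) μ :=
    hφ.aemeasurable.nullMeasurableSet_preimage (measurableSet_singleton 1)
  have hlimit : ∫ x, (φ ⁻¹' {1}).indicator 1 x ∂μ = μ.real (φ ⁻¹' {1}) := by
    simp [integral_indicator₀ hpre]
  rw [← hlimit]
  refine tendsto_integral_of_dominated_convergence φ
    (fun k ↦ hφ.aestronglyMeasurable.pow (k + 1)) hφ (fun k ↦ .of_forall fun x ↦ ?_)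
    (.of_forall fun x ↦ ?_)
  · rw [norm_pow, Real.norm_of_nonneg (hφ01 x).1]
    exact pow_le_of_le_one (hφ01 x).1 (hφ01 x).2 k.succ_ne_zero
  · by_cases hx : φ x = 1
    · simp [hx]
    · rw [indicator_of_notMem (by simpa using hx)]
      exact (tendsto_pow_atTop_nhds_zero_of_lt_one (hφ01 x).1
        (lt_of_le_of_ne (hφ01 x).2 hx)).comp (tendsto_add_atTop_nat 1)

/- A bump `φ` peaking only at `0` and supported in the `r`-ball sees only the diagonal pairs, as do
all its powers. So the integrals `∫ φ ^ (k + 1) ∂γ` all equal the density, while they tend to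
`γ {0}`. -/
lemma HasAutocorrelation.tendsto_card_div [LocallyCompactSpace G] [BorelSpace G] [l.NeBot]
    [IsFiniteMeasureOnCompacts γ] (hγ : HasAutocorrelation P a l γ) {r : ℝ} (hr : 0 < r)
    (hsep : ∀ n, (P n : Set G).Pairwise fun x y ↦ r ≤ dist x y) :
    Tendsto (fun n ↦ ((P n).card : ℝ) / a n) l (𝓝 (γ.real {0})) := by
  obtain ⟨φ, hpeak, hvanish, hφc, hφ01⟩ := exists_continuous_one_zero_of_isCompact_of_isGδ
    (isCompact_singleton (x := (0 : G))) (.singleton 0) (Metric.isOpen_ball (ε := r)).isClosed_compl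
    (disjoint_compl_right_iff_subset.2 (singleton_subset_iff.2 (Metric.mem_ball_self hr)))
  have hφ0 : φ 0 = 1 := hpeak.subset rfl
  have hpairSum : ∀ k n, pairSum (fun x ↦ φ x ^ (k + 1)) (P n) = ((P n).card : ℝ) := fun k n ↦ by
    refine pairSum_eq_card (by rw [hφ0, one_pow]) fun x hx y hy hxy ↦ ?_
    have hfar : x - y ∈ (Metric.ball (0 : G) r)ᶜ := by
      simpa [← dist_eq_norm] using hsep n hx hy hxy
    rw [hvanish hfar, Pi.zero_apply, zero_pow k.succ_ne_zero]
  have hdensity : ∀ k : ℕ,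
      Tendsto (fun n ↦ ((P n).card : ℝ) / a n) l (𝓝 (∫ x, φ x ^ (k + 1) ∂γ)) := fun k ↦ by
    simpa only [hpairSum, smul_eq_mul, ← div_eq_inv_mul] using
      hγ.tendsto_real (φ := fun x ↦ φ x ^ (k + 1)) (φ.continuous.pow (k + 1))
        (hφc.comp_left (g := (· ^ (k + 1))) (zero_pow k.succ_ne_zero))
  have hconst : ∀ k : ℕ, ∫ x, φ x ^ (k + 1) ∂γ = ∫ x, φ x ^ (0 + 1) ∂γ := fun k ↦
    tendsto_nhds_unique (hdensity k) (hdensity 0)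
  have hatom := tendsto_integral_pow_succ
    (φ.continuous.integrable_of_hasCompactSupport hφc (μ := γ)) hφ01
  simp only [hconst, ← hpeak] at hatom
  rw [← tendsto_nhds_unique tendsto_const_nhds hatom]
  exact hdensity 0

end Autocorrelation

lemma finite_inter_of_pairwise_le_dist {X : Type*} [MetricSpace X] [ProperSpace X] {Λ s : Set X}
    {r : ℝ} (hr : 0 < r) (hsep : Λ.Pairwise fun x y ↦ r ≤ dist x y) (hs : Bornology.IsBounded s) :
    (Λ ∩ s).Finite := by
  have hdiscrete : IsDiscrete Λ :=
    ⟨.of_forall_le_dist hr fun x y hxy ↦ hsep x.2 y.2 (Subtype.coe_ne_coe.2 hxy)⟩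
  rw [inter_comm]
  exact Metric.finite_isBounded_inter_isClosed hdiscrete hs
    (Metric.isClosed_of_pairwise_le_dist hr hsep)

-- Every point of `[a, b - R]` lies within `R` to the left of a point of `S`; compare lengths.
lemma sub_le_card_mul_of_relativelyDense {Λ : Set ℝ} {R : ℝ} (hR : 0 ≤ R)
    (hdense : ∀ x : ℝ, ∃ y ∈ Λ, y ∈ Icc x (x + R)) {a b : ℝ} {S : Finset ℝ}
    (hS : Λ ∩ Icc a b ⊆ S) : b - a - R ≤ S.card * R := by
  have hcover : Icc a (b - R) ⊆ ⋃ y ∈ S, Icc (y - R) y := fun x hx ↦ by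
    obtain ⟨y, hyΛ, hxy, hyx⟩ := hdense x
    have hyS : y ∈ S := hS ⟨hyΛ, hx.1.trans hxy, by linarith [hx.2]⟩
    exact mem_biUnion hyS ⟨by linarith, hxy⟩
  have hvol := (measure_mono (μ := volume) hcover).trans (measure_biUnion_finset_le S _)
  simp only [Real.volume_Icc, sub_sub_cancel, Finset.sum_const, nsmul_eq_mul] at hvol
  rw [← ENNReal.ofReal_natCast, ← ENNReal.ofReal_mul (Nat.cast_nonneg _),
    ENNReal.ofReal_le_ofReal_iff (by positivity)] at hvol
  linarith

lemma inv_le_of_tendsto_card_div_of_relativelyDense {Λ : Set ℝ} {R L : ℝ} (hR : 0 < R)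
    (hdense : ∀ x : ℝ, ∃ y ∈ Λ, y ∈ Icc x (x + R)) {P : ℕ → Finset ℝ}
    (hP : ∀ n : ℕ, Λ ∩ Icc (-n : ℝ) n ⊆ P n)
    (hL : Tendsto (fun n : ℕ ↦ ((P n).card : ℝ) / (2 * n)) atTop (𝓝 L)) : R⁻¹ ≤ L := by
  have hlower : Tendsto (fun n : ℕ ↦ R⁻¹ - 2⁻¹ * (n : ℝ)⁻¹) atTop (𝓝 R⁻¹) := by
    simpa using (tendsto_inv_atTop_nhds_zero_nat (𝕜 := ℝ)).const_mul 2⁻¹ |>.const_sub R⁻¹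
  refine le_of_tendsto_of_tendsto hlower hL ?_
  filter_upwards [eventually_gt_atTop 0] with n hn
  have : (0 : ℝ) < n := mod_cast hn
  have hcount := sub_le_card_mul_of_relativelyDense hR.le hdense (hP n)
  rw [le_div_iff₀ (by positivity)]
  field_simp
  linarith

section FactorialBlock

lemma factorial_add_add_two_mul_le_factorial {j k : ℕ} (hj : 3 ≤ j) (hjk : j < k) :
    j.factorial + j + 2 * k ≤ k.factorial := by
  induction k, hjk using Nat.le_induction with
  | base =>
    have : 6 ≤ j.factorial := Nat.factorial_le (m := 3) hj
    rw [Nat.succ_eq_add_one, Nat.factorial_succ]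
    nlinarith
  | succ k hk ih =>
    rw [Nat.factorial_succ]
    have : 2 ≤ k.factorial := Nat.factorial_le (m := 2) (by omega)
    nlinarith

/-- The patch `P (k + 3)` translated by `(k + 3)!`. Indexing from `k = 0` absorbs the condition
`3 ≤ n` in `shiftUnion`. -/
noncomputable def factorialBlock (P : ℕ → Finset ℝ) (k : ℕ) : Finset ℝ :=
  (P (k + 3)).map (addLeftEmbedding ((k + 3).factorial : ℝ))

variable {P : ℕ → Finset ℝ}

lemma card_factorialBlock (P : ℕ → Finset ℝ) (k : ℕ) :
    (factorialBlock P k).card = (P (k + 3)).card :=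
  Finset.card_map _

lemma pairMean_factorialBlock {E : Type*} [AddCommGroup E] [Module ℝ E] (f : ℝ → E)
    (P : ℕ → Finset ℝ) (k : ℕ) : pairMean f (factorialBlock P k) = pairMean f (P (k + 3)) :=
  pairMean_map_addLeftEmbedding f _ _

lemma shiftUnion_eq_iUnion_factorialBlock {Λ : Set ℝ}
    (hP : ∀ n : ℕ, (P n : Set ℝ) = Λ ∩ Icc (-n : ℝ) n) :
    shiftUnion Λ = ⋃ k, (factorialBlock P k : Set ℝ) := by
  simp only [shiftUnion, factorialBlock, Finset.coe_map, hP, addLeftEmbedding_apply]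
  exact iUnion_ge_eq_iUnion_nat_add _ 3

lemma mem_Icc_of_mem_factorialBlock (hP : ∀ n : ℕ, (P n : Set ℝ) ⊆ Icc (-n : ℝ) n) {k : ℕ} {x : ℝ}
    (hx : x ∈ factorialBlock P k) :
    x ∈ Icc ((k + 3).factorial - (k + 3 : ℝ)) ((k + 3).factorial + (k + 3 : ℝ)) := by
  obtain ⟨y, hy, rfl⟩ := Finset.mem_map.1 hx
  have hyP := hP (k + 3) hy
  push_cast at hyP
  rw [addLeftEmbedding_apply]
  exact ⟨by linarith [hyP.1], by linarith [hyP.2]⟩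

lemma le_sub_of_mem_factorialBlock (hP : ∀ n : ℕ, (P n : Set ℝ) ⊆ Icc (-n : ℝ) n) {j k : ℕ}
    (hjk : j < k) {x y : ℝ} (hx : x ∈ factorialBlock P j) (hy : y ∈ factorialBlock P k) :
    (k : ℝ) ≤ y - x := by
  have hgap : ((j + 3).factorial + (j + 3) + 2 * (k + 3) : ℝ) ≤ (k + 3).factorial := by
    exact_mod_cast factorial_add_add_two_mul_le_factorial (by omega) (Nat.add_lt_add_right hjk 3)
  linarith [(mem_Icc_of_mem_factorialBlock hP hx).2, (mem_Icc_of_mem_factorialBlock hP hy).1]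

lemma pairwise_disjoint_factorialBlock (hP : ∀ n : ℕ, (P n : Set ℝ) ⊆ Icc (-n : ℝ) n) :
    Pairwise (Disjoint on factorialBlock P) := by
  refine (pairwise_disjoint_on _).2 fun j k hjk ↦ Finset.disjoint_left.2 fun x hxj hxk ↦ ?_
  have hk : (k : ℝ) ≤ 0 := by simpa using le_sub_of_mem_factorialBlock hP hjk hxj hxk
  have : k ≤ 0 := mod_cast hk
  omega

lemma eventually_cross_eq_zero_factorialBlock (hP : ∀ n : ℕ, (P n : Set ℝ) ⊆ Icc (-n : ℝ) n)
    {E : Type*} [Zero E] {f : ℝ → E} (hf : HasCompactSupport f) :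
    ∀ᶠ k in atTop, ∀ j < k, ∀ x ∈ factorialBlock P j, ∀ y ∈ factorialBlock P k,
      f (x - y) = 0 ∧ f (y - x) = 0 := by
  have hvanish : ∀ᶠ t : ℝ in atTop, f (-t) = 0 ∧ f t = 0 := by
    rw [hasCompactSupport_iff_eventuallyEq, coclosedCompact_eq_cocompact,
      cocompact_eq_atBot_atTop] at hf
    obtain ⟨hbot, htop⟩ := eventually_sup.1 hf
    exact (tendsto_neg_atTop_atBot.eventually hbot).and htop
  filter_upwards [tendsto_natCast_atTop_atTop.eventually (eventually_forall_ge_atTop.2 hvanish)]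
    with k hk j hjk x hx y hy
  simpa only [neg_sub] using hk _ (le_sub_of_mem_factorialBlock hP hjk hx hy)

lemma exists_tendsto_atTop_forall_lt_iff_le {a : ℕ → ℕ} (ha : StrictMono a) :
    ∃ i : ℕ → ℕ, Tendsto i atTop atTop ∧ ∀ n k, k < i n ↔ a k ≤ n := by
  have hex : ∀ n, ∃ m, n < a m := fun n ↦ ⟨n + 1, ha.le_apply⟩
  have hiff : ∀ n k, k < Nat.find (hex n) ↔ a k ≤ n := fun n k ↦ by
    simp only [Nat.lt_find_iff, not_lt]
    exact ⟨fun h ↦ h k le_rfl, fun h m hm ↦ (ha.monotone hm).trans h⟩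
  exact ⟨fun n ↦ Nat.find (hex n), tendsto_atTop.2 fun k ↦
    (eventually_ge_atTop (a k)).mono fun n hn ↦ ((hiff n k).2 hn).le, hiff⟩

lemma strictMono_factorial_add : StrictMono fun k : ℕ ↦ (k + 3).factorial + (k + 3) :=
  strictMono_nat_of_lt_succ fun _ ↦
    add_lt_add_of_le_of_lt (Nat.factorial_le (Nat.le_succ _)) (Nat.lt_succ_self _)

lemma coe_blockUnion_factorialBlock_subset (hP : ∀ n : ℕ, (P n : Set ℝ) ⊆ Icc (-n : ℝ) n)
    {n m : ℕ} (hm : ∀ k, k < m ↔ (k + 3).factorial + (k + 3) ≤ n) :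
    (blockUnion (factorialBlock P) m : Set ℝ) ⊆
      (⋃ k, (factorialBlock P k : Set ℝ)) ∩ Icc (-n : ℝ) n := fun x hx ↦ by
  obtain ⟨k, hkm, hxk⟩ := mem_blockUnion.1 hx
  have hkn : ((k + 3).factorial + (k + 3) : ℝ) ≤ n := mod_cast (hm k).1 hkm
  have hxI := mem_Icc_of_mem_factorialBlock hP hxk
  refine ⟨mem_iUnion_of_mem k hxk, ?_, hxI.2.trans hkn⟩
  have : (0 : ℝ) ≤ (k + 3).factorial := by positivity
  linarith [hxI.1]

lemma iUnion_factorialBlock_inter_Icc_subset (hP : ∀ n : ℕ, (P n : Set ℝ) ⊆ Icc (-n : ℝ) n)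
    {n m : ℕ} (hm : ∀ k, k < m ↔ (k + 3).factorial + (k + 3) ≤ n) :
    (⋃ k, (factorialBlock P k : Set ℝ)) ∩ Icc (-n : ℝ) n ⊆
      blockUnion (factorialBlock P) (m + 1) := fun x ⟨hx, _, hxn⟩ ↦ by
  obtain ⟨k, hxk⟩ := mem_iUnion.1 hx
  refine mem_blockUnion.2 ⟨k, Nat.lt_succ_iff.2 (not_lt.1 fun hmk ↦ ?_), hxk⟩
  have hgap : ((m + 3).factorial + (m + 3) + 2 * (k + 3) : ℝ) ≤ (k + 3).factorial := by
    exact_mod_cast factorial_add_add_two_mul_le_factorial (by omega) (Nat.add_lt_add_right hmk 3)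
  have hnm : (n : ℝ) < (m + 3).factorial + (m + 3) := by
    exact_mod_cast not_le.1 (mt (hm m).2 (lt_irrefl m))
  have : (0 : ℝ) ≤ k := k.cast_nonneg
  linarith [(mem_Icc_of_mem_factorialBlock hP hxk).1]

variable {L : ℝ}

lemma card_factorialBlock_isBigO
    (hL : Tendsto (fun n : ℕ ↦ ((P n).card : ℝ) / (2 * n)) atTop (𝓝 L)) :
    (fun k ↦ ((factorialBlock P k).card : ℝ)) =O[atTop] fun k ↦ (k : ℝ) := by
  have hP : (fun n ↦ ((P n).card : ℝ)) =O[atTop] fun n : ℕ ↦ (2 * n : ℝ) :=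
    isBigO_of_div_tendsto_nhds
      ((eventually_gt_atTop 0).mono fun n hn h0 ↦ absurd h0 (by positivity)) L hL
  have hshift : (fun k : ℕ ↦ (2 * (k + 3 : ℕ) : ℝ)) =O[atTop] fun k : ℕ ↦ (k : ℝ) := by
    refine .of_bound 8 ((eventually_ge_atTop 1).mono fun k hk ↦ ?_)
    have : (1 : ℝ) ≤ k := mod_cast hk
    rw [Real.norm_of_nonneg (by positivity), RCLike.norm_natCast]
    push_cast
    linarith
  simpa only [card_factorialBlock, comp_def] using
    (hP.comp_tendsto (tendsto_add_atTop_nat 3)).trans hshift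

lemma tendsto_card_factorialBlock_atTop (hLpos : 0 < L)
    (hL : Tendsto (fun n : ℕ ↦ ((P n).card : ℝ) / (2 * n)) atTop (𝓝 L)) :
    Tendsto (fun k ↦ (factorialBlock P k).card) atTop atTop := by
  have hP : Tendsto (fun n ↦ ((P n).card : ℝ)) atTop atTop :=
    (tendsto_natCast_atTop_atTop.const_mul_atTop two_pos).num hLpos hL
  simpa only [card_factorialBlock, comp_def] using
    (tendsto_natCast_atTop_iff.1 hP).comp (tendsto_add_atTop_nat 3)

lemma tendsto_pairMean_factorialBlock {E : Type*} [NormedAddCommGroup E] [NormedSpace ℝ E]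
    {f : ℝ → E} {I : E} {a : ℕ → ℝ} (hL0 : L ≠ 0)
    (hL : Tendsto (fun n ↦ ((P n).card : ℝ) / a n) atTop (𝓝 L))
    (hsum : Tendsto (fun n ↦ (a n)⁻¹ • pairSum f (P n)) atTop (𝓝 I)) :
    Tendsto (fun k ↦ pairMean f (factorialBlock P k)) atTop (𝓝 (L⁻¹ • I)) := by
  simpa only [pairMean_factorialBlock, comp_def] using
    (tendsto_pairMean_of_tendsto_inv_smul hL0 hL hsum).comp (tendsto_add_atTop_nat 3)

end FactorialBlock

theorem HasAutocorrelation.tendsto_pairMean_factorialBlocks {P : ℕ → Finset ℝ} {γ : Measure ℝ}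
    (hγ : HasAutocorrelation P (fun n ↦ 2 * n) atTop γ)
    (hP : ∀ n : ℕ, (P n : Set ℝ) ⊆ Icc (-n : ℝ) n) {L : ℝ} (hLpos : 0 < L)
    (hL : Tendsto (fun n : ℕ ↦ ((P n).card : ℝ) / (2 * n)) atTop (𝓝 L))
    {ι : Type*} {l : Filter ι} {i : ι → ℕ} (hi : Tendsto i l atTop) {S : ι → Finset ℝ}
    (hlower : ∀ n, blockUnion (factorialBlock P) (i n) ⊆ S n)
    (hupper : ∀ n, S n ⊆ blockUnion (factorialBlock P) (i n + 1))
    {f : ℝ → ℂ} (hf : Continuous f) (hfc : HasCompactSupport f) :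
    Tendsto (fun n ↦ pairMean f (S n)) l (𝓝 (L⁻¹ • ∫ x, f x ∂γ)) := by
  have hmean := tendsto_pairMean_factorialBlock hLpos.ne' hL (hγ f hf hfc)
  have hnorm := tendsto_pairMean_factorialBlock hLpos.ne' hL (hγ.tendsto_real hf.norm hfc.norm)
  exact tendsto_pairMean_of_blockUnion_subset (pairwise_disjoint_factorialBlock hP)
    (eventually_cross_eq_zero_factorialBlock hP hfc) (tendsto_card_factorialBlock_atTop hLpos hL)
    (card_factorialBlock_isBigO hL) (hnorm.isBigO_one ℝ) hmean hi hlower hupper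

lemma exists_tendsto_atTop_shiftUnion_between_blockUnion {Λ : Set ℝ} {P : ℕ → Finset ℝ}
    (hP : ∀ n : ℕ, (P n : Set ℝ) = Λ ∩ Icc (-n : ℝ) n) :
    ∃ (i : ℕ → ℕ) (S : ℕ → Finset ℝ), Tendsto i atTop atTop ∧
      (∀ᶠ n in atTop, (i n + 2).factorial ≤ n) ∧
      ∀ n : ℕ, (S n : Set ℝ) = shiftUnion Λ ∩ Icc (-n : ℝ) n ∧
        blockUnion (factorialBlock P) (i n) ⊆ S n ∧
        S n ⊆ blockUnion (factorialBlock P) (i n + 1) := by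
  have hPI : ∀ n : ℕ, (P n : Set ℝ) ⊆ Icc (-n : ℝ) n := fun n ↦
    (hP n).trans_subset inter_subset_right
  obtain ⟨i, hi, hlt⟩ := exists_tendsto_atTop_forall_lt_iff_le strictMono_factorial_add
  have hsub : ∀ n : ℕ, shiftUnion Λ ∩ Icc (-n : ℝ) n ⊆ blockUnion (factorialBlock P) (i n + 1) :=
    fun n ↦ by
      rw [shiftUnion_eq_iUnion_factorialBlock hP]
      exact iUnion_factorialBlock_inter_Icc_subset hPI (hlt n)
  choose S hS using fun n ↦ ((Finset.finite_toSet _).subset (hsub n)).exists_finset_coe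
  refine ⟨i, S, hi, ?_, fun n ↦ ⟨hS n, ?_, ?_⟩⟩
  · filter_upwards [hi.eventually_gt_atTop 0] with n hn
    obtain ⟨k, hk⟩ := Nat.exists_eq_add_of_lt hn
    have := (hlt n k).1 (by omega)
    rw [show i n + 2 = k + 3 by omega]
    omega
  · rw [← Finset.coe_subset, hS, shiftUnion_eq_iUnion_factorialBlock hP]
    exact coe_blockUnion_factorialBlock_subset hPI (hlt n)
  · rw [← Finset.coe_subset, hS]
    exact hsub n

theorem zero_density_set_with_prescribed_counting_diffraction_general
    (Λ : Set ℝ) {r : ℝ} (hr : 0 < r) (hsep : Λ.Pairwise fun x y ↦ r ≤ dist x y)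
    (hrel : ∃ R : ℝ, 0 < R ∧ ∀ x : ℝ, ∃ y ∈ Λ, y ∈ Icc x (x + R))
    (γ : Measure ℝ) [IsFiniteMeasureOnCompacts γ]
    (hconv : ∀ f : ℝ → ℂ, Continuous f → HasCompactSupport f →
      Tendsto (fun n : ℕ ↦ ((2 * n : ℝ) : ℂ)⁻¹ *
          ∑ᶠ x ∈ Λ ∩ Icc (-n : ℝ) n, ∑ᶠ y ∈ Λ ∩ Icc (-n : ℝ) n, f (x - y))
        atTop (𝓝 (∫ x, f x ∂γ))) :
    Tendsto (fun n : ℕ ↦ ((shiftUnion Λ ∩ Icc (-n : ℝ) n).ncard : ℝ) / (2 * n)) atTop (𝓝 0) ∧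
    Tendsto (fun n : ℕ ↦ ((Λ ∩ Icc (-n : ℝ) n).ncard : ℝ) / (2 * n))
      atTop (𝓝 (γ {0}).toReal) ∧
    0 < (γ {0}).toReal ∧
    ∀ f : ℝ → ℂ, Continuous f → HasCompactSupport f →
      Tendsto (fun n : ℕ ↦ autoCorr (shiftUnion Λ ∩ Icc (-n : ℝ) n) f)
        atTop (𝓝 (((γ {0}).toReal : ℂ)⁻¹ * ∫ x, f x ∂γ)) := by
  choose P hP using fun n : ℕ ↦
    (finite_inter_of_pairwise_le_dist hr hsep (Metric.isBounded_Icc (-n : ℝ) n)).exists_finset_coe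
  obtain ⟨i, S, hi, hfact, hS⟩ := exists_tendsto_atTop_shiftUnion_between_blockUnion hP
  have hPI : ∀ n : ℕ, (P n : Set ℝ) ⊆ Icc (-n : ℝ) n := fun n ↦
    (hP n).trans_subset inter_subset_right
  simp only [← (hS _).1, ← hP, ncard_coe_finset, finsum_mem_coe_finset, autoCorr_coe_finset]
    at hconv ⊢
  have hγ : HasAutocorrelation P (fun n ↦ 2 * n) atTop γ := fun f hf hfc ↦ by
    simpa only [pairSum, Complex.real_smul, Complex.ofReal_inv] using hconv f hf hfc
  have hdensity : Tendsto (fun n : ℕ ↦ ((P n).card : ℝ) / (2 * n)) atTop (𝓝 (γ.real {0})) :=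
    hγ.tendsto_card_div hr fun n ↦ hsep.mono ((hP n).trans_subset inter_subset_left)
  obtain ⟨R, hR, hdense⟩ := hrel
  have hpos : 0 < γ.real {0} := (inv_pos.2 hR).trans_le
    (inv_le_of_tendsto_card_div_of_relativelyDense hR hdense (fun n ↦ (hP n).superset) hdensity)
  refine ⟨?_, hdensity, hpos, fun f hf hfc ↦ ?_⟩
  · exact tendsto_card_div_zero_of_subset_blockUnion (pairwise_disjoint_factorialBlock hPI)
      (card_factorialBlock_isBigO hdensity) hi hfact fun n ↦ (hS n).2.2
  · simpa only [Complex.real_smul, Complex.ofReal_inv, measureReal_def] using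
      hγ.tendsto_pairMean_factorialBlocks hPI hpos hdensity hi (fun n ↦ (hS n).2.1)
        (fun n ↦ (hS n).2.2) hf hfc

theorem zero_density_set_with_prescribed_counting_diffraction
    (Λ : Set ℝ) (hZ : Λ ⊆ Set.range ((↑) : ℤ → ℝ))
    (hrel : ∃ R : ℝ, 0 < R ∧ ∀ x : ℝ, ∃ y ∈ Λ, y ∈ Set.Icc x (x + R))
    (γ : Measure ℝ) [IsFiniteMeasureOnCompacts γ]
    (hconv : ∀ f : ℝ → ℂ, Continuous f → HasCompactSupport f →
      Tendsto (fun n : ℕ => (((2 * n : ℝ)) : ℂ)⁻¹ *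
          ∑ᶠ x ∈ Λ ∩ Set.Icc (-(n : ℝ)) (n : ℝ),
            ∑ᶠ y ∈ Λ ∩ Set.Icc (-(n : ℝ)) (n : ℝ), f (x - y))
        atTop (nhds (∫ x, f x ∂γ))) :
    (Tendsto (fun n : ℕ => ((shiftUnion Λ ∩ Set.Icc (-(n : ℝ)) (n : ℝ)).ncard : ℝ) /
        (2 * n)) atTop (nhds 0)) ∧
    (Tendsto (fun n : ℕ => ((Λ ∩ Set.Icc (-(n : ℝ)) (n : ℝ)).ncard : ℝ) / (2 * n))
        atTop (nhds (γ {(0 : ℝ)}).toReal)) ∧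
    0 < (γ {(0 : ℝ)}).toReal ∧
    (∀ f : ℝ → ℂ, Continuous f → HasCompactSupport f →
      Tendsto (fun n : ℕ => autoCorr (shiftUnion Λ ∩ Set.Icc (-(n : ℝ)) (n : ℝ)) f)
        atTop (nhds ((((γ {(0 : ℝ)}).toReal : ℂ))⁻¹ * ∫ x, f x ∂γ))) := by
  have hsep : (range ((↑) : ℤ → ℝ)).Pairwise fun x y ↦ 1 ≤ dist x y :=
    Pairwise.range_pairwise Int.pairwise_one_le_dist
  exact zero_density_set_with_prescribed_counting_diffraction_general Λ one_pos (hsep.mono hZ)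
    hrel γ hconv
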